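/- arXiv:1510.04911 — 2 statements merged into one kernel-verified Lean document; each statement's English description precedes it below -/
import Mathlib

section
/- Let q and r be coprime integers with q ≥ 2 and r ≥ 2, and let A be a complex number with A^{qr} = 1, A^q ≠ 1 and A^r ≠ 1. Then Σ_{j=0}^{(q−1)(r−1)} (r_{q,r}(j) − r_{q,r}(j−1)) A^j = 0, where r_{q,r}(−1) is interpreted as 0. -/
/-- `repCount q r n` is the number of pairs `(l, m)` of nonnegative integers with
`l*q + m*r = n`. -/
noncomputable def repCount (q r n : ℕ) : ℕ := Nat.card {lm : ℕ × ℕ // lm.1 * q + lm.2 * r = n}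

/-!
The generating function of `repCount q r` is `1 / ((1 - X ^ q) (1 - X ^ r))`. For coprime `q` and
`r` the geometric sums `(1 - X ^ q) / (1 - X)` and `(1 - X ^ r) / (1 - X)` are coprime divisors of
`(1 - X ^ (q * r)) / (1 - X)`, so
`P = (1 - X) (1 - X ^ (q * r)) / ((1 - X ^ q) (1 - X ^ r))`
is a polynomial, of degree `(q - 1) (r - 1) < q * r`. Below degree `q * r` its coefficients are
those of `(1 - X) / ((1 - X ^ q) (1 - X ^ r))`, that is, the differences of consecutive
representation counts. Hence the sum in question is `P(A)`, which vanishes because the numerator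
of `P` vanishes at `A` while its denominator does not.
-/

open Finset

section GeomSum

theorem geom_sum_add {R : Type*} [Semiring R] (x : R) (m n : ℕ) :
    ∑ i ∈ range (m + n), x ^ i = ∑ i ∈ range m, x ^ i + x ^ m * ∑ i ∈ range n, x ^ i := by
  simp only [sum_range_add, pow_add, mul_sum]

theorem geom_sum_dvd_geom_sum {R : Type*} [CommSemiring R] (x : R) {m n : ℕ} (h : m ∣ n) :
    ∑ i ∈ range m, x ^ i ∣ ∑ i ∈ range n, x ^ i := by
  obtain ⟨k, rfl⟩ := h
  induction k with
  | zero => simp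
  | succ k ih =>
    rw [Nat.mul_succ, geom_sum_add]
    exact dvd_add ih (dvd_mul_left _ _)

theorem isCoprime_geom_sum {R : Type*} [CommRing R] (x : R) {m n : ℕ} (h : m.Coprime n) :
    IsCoprime (∑ i ∈ range m, x ^ i) (∑ i ∈ range n, x ^ i) := by
  induction m, n using Nat.gcd.induction with
  | H0 n =>
    rw [Nat.coprime_zero_left] at h
    simp [h, isCoprime_one_right]
  | H1 m n _ ih =>
    obtain ⟨c, hc⟩ := geom_sum_dvd_geom_sum x (Dvd.intro (n / m) rfl)
    rw [← Nat.mod_add_div n m, geom_sum_add, hc, mul_left_comm]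
    refine (ih ?_).symm.add_mul_left_right _
    rwa [Nat.Coprime, ← Nat.gcd_rec]

open Polynomial

theorem natDegree_geom_sum_X {R : Type*} [Ring R] [Nontrivial R] (n : ℕ) :
    (∑ i ∈ range n, (X : R[X]) ^ i).natDegree = n - 1 := by
  rcases eq_or_ne n 0 with rfl | hn
  · simp
  · have hmul := (monic_geom_sum_X (R := R) hn).natDegree_mul (monic_X_sub_C 1)
    rw [C_1, geom_sum_mul, ← C_1, natDegree_X_pow_sub_C, natDegree_X_sub_C] at hmul
    omega

theorem exists_geom_sum_X_mul_geom_sum_X_mul_eq {R : Type*} [CommRing R] [Nontrivial R] {q r : ℕ}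
    (hq : q ≠ 0) (hr : r ≠ 0) (hqr : q.Coprime r) :
    ∃ P : R[X], P.natDegree = (q - 1) * (r - 1) ∧
      (∑ i ∈ range q, X ^ i) * (∑ i ∈ range r, X ^ i) * P = ∑ i ∈ range (q * r), X ^ i := by
  obtain ⟨P, hP⟩ := (isCoprime_geom_sum (X : R[X]) hqr).mul_dvd
    (geom_sum_dvd_geom_sum X (dvd_mul_right q r)) (geom_sum_dvd_geom_sum X (dvd_mul_left r q))
  refine ⟨P, ?_, hP.symm⟩
  have hmonic := (monic_geom_sum_X (R := R) hq).mul (monic_geom_sum_X hr)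
  have hPmonic : P.Monic := hmonic.of_mul_monic_left (hP ▸ monic_geom_sum_X (mul_ne_zero hq hr))
  have hdegree := congrArg natDegree hP
  rw [hmonic.natDegree_mul hPmonic, (monic_geom_sum_X hq).natDegree_mul (monic_geom_sum_X hr)]
    at hdegree
  simp only [natDegree_geom_sum_X] at hdegree
  obtain ⟨a, rfl⟩ := Nat.exists_eq_succ_of_ne_zero hq
  obtain ⟨b, rfl⟩ := Nat.exists_eq_succ_of_ne_zero hr
  simp only [Nat.succ_eq_add_one, Nat.add_sub_cancel, add_mul, mul_add, mul_one, one_mul]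
    at hdegree ⊢
  omega

end GeomSum

section GeneratingFunction

open PowerSeries

theorem coeff_mk_mul_one_sub_X {R : Type*} [Ring R] (f : ℕ → R) (n : ℕ) :
    coeff n (mk f * (1 - X)) = f n - if n = 0 then 0 else f (n - 1) := by
  cases n <;> simp [mul_sub, coeff_succ_mul_X]

variable {R : Type*} [CommRing R] {q r : ℕ}

theorem expand_mk_one_mul_one_sub_X_pow (hq : q ≠ 0) :
    expand q hq (mk 1 : R⟦X⟧) * (1 - X ^ q) = 1 := by
  simpa using congrArg (expand q hq) (mk_one_mul_one_sub_eq_one R)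

theorem repCount_eq_card_filter_antidiagonal (hq : q ≠ 0) (hr : r ≠ 0) (n : ℕ) :
    repCount q r n = #{ab ∈ antidiagonal n | q ∣ ab.1 ∧ r ∣ ab.2} := by
  rw [repCount, ← Nat.card_eq_finsetCard]
  refine Nat.card_congr
    { toFun := fun lm ↦ ⟨(lm.1.1 * q, lm.1.2 * r), by simp [lm.2]⟩
      invFun := fun ab ↦ ⟨(ab.1.1 / q, ab.1.2 / r), ?_⟩
      left_inv := fun lm ↦ by simp [hq, hr]
      right_inv := fun ab ↦ ?_ }
  all_goals
    obtain ⟨⟨a, b⟩, hab⟩ := ab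
    obtain ⟨hsum, hqa, hrb⟩ : a + b = n ∧ q ∣ a ∧ r ∣ b := by simpa using hab
    simp [Nat.div_mul_cancel, *]

theorem mk_repCount_eq_expand_mul_expand (hq : q ≠ 0) (hr : r ≠ 0) :
    (mk fun n ↦ (repCount q r n : R)) = expand q hq (mk 1) * expand r hr (mk 1) := by
  ext n
  simp [coeff_mul, coeff_expand, repCount_eq_card_filter_antidiagonal hq hr, ← ite_and, and_comm]

theorem mk_repCount_mul_one_sub_X_pow (hq : q ≠ 0) (hr : r ≠ 0) :
    (mk fun n ↦ (repCount q r n : R)) * ((1 - X ^ q) * (1 - X ^ r)) = 1 := by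
  rw [mk_repCount_eq_expand_mul_expand hq hr, mul_mul_mul_comm,
    expand_mk_one_mul_one_sub_X_pow, expand_mk_one_mul_one_sub_X_pow, mul_one]

end GeneratingFunction

section RepDiffPoly

open Polynomial

/-- The polynomial `∑ (r_{q,r}(j) - r_{q,r}(j-1)) X^j`, summed over `0 ≤ j ≤ (q-1)(r-1)`, with
`r_{q,r}(-1) = 0`. It has integer coefficients so that it can be evaluated in any ring, commutative
or not. -/
noncomputable def repDiffPoly (q r : ℕ) : ℤ[X] :=
  ∑ j ∈ range ((q - 1) * (r - 1) + 1),
    C ((repCount q r j : ℤ) - if j = 0 then 0 else (repCount q r (j - 1) : ℤ)) * X ^ j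

theorem aeval_repDiffPoly {R : Type*} [Ring R] (q r : ℕ) (A : R) :
    aeval A (repDiffPoly q r) = ∑ j ∈ range ((q - 1) * (r - 1) + 1),
      ((repCount q r j : R) - (if j = 0 then 0 else (repCount q r (j - 1) : R))) * A ^ j := by
  simp [repDiffPoly, apply_ite]

variable {R : Type*} [CommRing R] {q r : ℕ}

theorem coe_eq_mk_repCount_mul (hq : q ≠ 0) (hr : r ≠ 0) {P : R[X]}
    (hP : (1 - X ^ q) * (1 - X ^ r) * P = (1 - X) * (1 - X ^ (q * r))) :
    (P : PowerSeries R) = (PowerSeries.mk fun n ↦ (repCount q r n : R)) * (1 - PowerSeries.X) *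
      (1 - PowerSeries.X ^ (q * r)) := by
  have hPseries := congrArg ((↑) : R[X] → PowerSeries R) hP
  push_cast at hPseries
  rw [mul_assoc, ← hPseries, ← mul_assoc, mk_repCount_mul_one_sub_X_pow hq hr, one_mul]

theorem coeff_eq_repCount_sub (hq : q ≠ 0) (hr : r ≠ 0) {P : R[X]}
    (hP : (1 - X ^ q) * (1 - X ^ r) * P = (1 - X) * (1 - X ^ (q * r)))
    {j : ℕ} (hj : j < q * r) :
    P.coeff j = (repCount q r j : R) - if j = 0 then 0 else (repCount q r (j - 1) : R) := by
  rw [← Polynomial.coeff_coe, coe_eq_mk_repCount_mul hq hr hP, mul_sub, mul_one, map_sub,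
    PowerSeries.coeff_mul_X_pow', if_neg hj.not_ge, sub_zero, coeff_mk_mul_one_sub_X]

theorem one_sub_X_pow_mul_repDiffPoly (hq : q ≠ 0) (hr : r ≠ 0) (hqr : q.Coprime r) :
    (1 - X ^ q) * (1 - X ^ r) * repDiffPoly q r = (1 - X) * (1 - X ^ (q * r)) := by
  obtain ⟨P, hdegree, hP⟩ := exists_geom_sum_X_mul_geom_sum_X_mul_eq (R := ℤ) hq hr hqr
  have hPX : (1 - X ^ q) * (1 - X ^ r) * P = (1 - X) * (1 - X ^ (q * r)) := by
    simp only [← mul_neg_geom_sum X, ← hP]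
    ring
  have hlt : (q - 1) * (r - 1) < q * r :=
    Nat.mul_lt_mul_of_lt_of_le (by omega) (by omega) (by omega)
  suffices repDiffPoly q r = P by rwa [this]
  rw [P.as_sum_range_C_mul_X_pow, hdegree]
  refine sum_congr rfl fun j hj ↦ ?_
  rw [coeff_eq_repCount_sub hq hr hPX ((Nat.le_of_lt_succ (mem_range.mp hj)).trans_lt hlt)]

end RepDiffPoly

theorem stmt_8_general {R : Type*} [Ring R] [NoZeroDivisors R] {q r : ℕ} (hqr : Nat.gcd q r = 1)
    {A : R} (hA : A ^ (q * r) = 1) (hAq : A ^ q ≠ 1) (hAr : A ^ r ≠ 1) :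
    ∑ j ∈ Finset.range ((q - 1) * (r - 1) + 1),
      ((repCount q r j : R) - (if j = 0 then 0 else (repCount q r (j - 1) : R))) * A ^ j
      = 0 := by
  have hq : q ≠ 0 := by
    rintro rfl
    exact hAq (pow_zero A)
  have hr : r ≠ 0 := by
    rintro rfl
    exact hAr (pow_zero A)
  have hmul : (1 - A ^ q) * (1 - A ^ r) * Polynomial.aeval A (repDiffPoly q r) = 0 := by
    simpa [hA] using congrArg (Polynomial.aeval A) (one_sub_X_pow_mul_repDiffPoly hq hr hqr)
  have hne : (1 - A ^ q) * (1 - A ^ r) ≠ 0 :=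
    mul_ne_zero (sub_ne_zero.mpr hAq.symm) (sub_ne_zero.mpr hAr.symm)
  rw [← aeval_repDiffPoly]
  exact (mul_eq_zero.mp hmul).resolve_left hne

/-- For coprime `q, r ≥ 2` and a complex number `A` with `A^(qr) = 1`, `A^q ≠ 1`
and `A^r ≠ 1`, we have `Σ_{j=0}^{(q-1)(r-1)} (r_{q,r}(j) - r_{q,r}(j-1)) A^j = 0`,
where `r_{q,r}(-1)` is interpreted as `0`. -/
theorem stmt_8 (q r : ℕ) (hq : 2 ≤ q) (hr : 2 ≤ r) (hqr : Nat.gcd q r = 1)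
    (A : ℂ) (hA : A ^ (q * r) = 1) (hAq : A ^ q ≠ 1) (hAr : A ^ r ≠ 1) :
    ∑ j ∈ Finset.range ((q - 1) * (r - 1) + 1),
      ((repCount q r j : ℂ) - (if j = 0 then 0 else (repCount q r (j - 1) : ℂ))) * A ^ j
      = 0 :=
  stmt_8_general hqr hA hAq hAr
end

section
/- Let T1, T2, T3 be positive integers with gcd(T1,T2,T3) = 1 and let D = T1+T2+T3−d12−d23−d13 be the degree of P_3. Then P_3 is palindromic: its coefficients satisfy c_k = c_{D−k} for every integer k with 0 ≤ k ≤ D. -/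
open Polynomial

/-! Reversing `1 - X ^ n` only changes its sign, and reversal is multiplicative over a domain. Hence
an identity `A * P = B`, with `A` and `B` products of such factors, reverses to
`A * P.reverse = ± A * P`, and cancelling `A` gives `P.reverse = ± P`. -/

section Ring

variable {R : Type*} [Ring R]

lemma natDegree_one_sub_X_pow [Nontrivial R] (n : ℕ) : (1 - X ^ n : R[X]).natDegree = n := by
  rw [← neg_sub, natDegree_neg, ← C_1, natDegree_X_pow_sub_C]

lemma one_sub_X_pow_ne_zero [Nontrivial R] {n : ℕ} (hn : n ≠ 0) : (1 - X ^ n : R[X]) ≠ 0 :=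
  ne_zero_of_natDegree_gt (n := 0) <| by
    rwa [natDegree_one_sub_X_pow, Nat.pos_iff_ne_zero]

lemma reverse_one_sub_X_pow (n : ℕ) : (1 - X ^ n : R[X]).reverse = -(1 - X ^ n) := by
  nontriviality R
  rw [reverse, natDegree_one_sub_X_pow, reflect_sub, reflect_one, reflect_monomial,
    revAt_le le_rfl, Nat.sub_self, pow_zero, neg_sub]

end Ring

section Prod

variable {R ι κ : Type*}

lemma reverse_prod_of_domain [CommSemiring R] [NoZeroDivisors R] (s : Finset ι)
    (f : ι → R[X]) :
    (∏ i ∈ s, f i).reverse = ∏ i ∈ s, (f i).reverse := by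
  classical
  induction s using Finset.induction_on with
  | empty => simpa using reverse_C (1 : R)
  | insert i s hi ih =>
    rw [Finset.prod_insert hi, Finset.prod_insert hi, reverse_mul_of_domain, ih]

lemma reverse_prod_one_sub_X_pow [CommRing R] [NoZeroDivisors R] (s : Finset ι)
    (n : ι → ℕ) :
    (∏ i ∈ s, (1 - X ^ n i) : R[X]).reverse = (-1) ^ s.card * ∏ i ∈ s, (1 - X ^ n i) := by
  simp only [reverse_prod_of_domain, reverse_one_sub_X_pow, Finset.prod_neg]

variable [CommRing R] [IsDomain R]

lemma prod_one_sub_X_pow_ne_zero {s : Finset ι} {n : ι → ℕ} (hn : ∀ i ∈ s, n i ≠ 0) :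
    (∏ i ∈ s, (1 - X ^ n i) : R[X]) ≠ 0 :=
  Finset.prod_ne_zero_iff.2 fun i hi => one_sub_X_pow_ne_zero (hn i hi)

lemma natDegree_prod_one_sub_X_pow {s : Finset ι} {n : ι → ℕ} (hn : ∀ i ∈ s, n i ≠ 0) :
    (∏ i ∈ s, (1 - X ^ n i) : R[X]).natDegree = ∑ i ∈ s, n i := by
  rw [natDegree_prod _ _ fun i hi => one_sub_X_pow_ne_zero (hn i hi)]
  simp only [natDegree_one_sub_X_pow]

variable {s : Finset ι} {t : Finset κ} {d : ι → ℕ} {T : κ → ℕ} {P : R[X]}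

lemma natDegree_of_prod_one_sub_X_pow_mul_eq (hd : ∀ i ∈ s, d i ≠ 0) (hT : ∀ j ∈ t, T j ≠ 0)
    (hP : (∏ i ∈ s, (1 - X ^ d i)) * P = ∏ j ∈ t, (1 - X ^ T j)) :
    P.natDegree = ∑ j ∈ t, T j - ∑ i ∈ s, d i := by
  have hP_ne : P ≠ 0 := right_ne_zero_of_mul (hP ▸ prod_one_sub_X_pow_ne_zero hT)
  have hdeg := congrArg natDegree hP
  rw [natDegree_mul (prod_one_sub_X_pow_ne_zero hd) hP_ne, natDegree_prod_one_sub_X_pow hd,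
    natDegree_prod_one_sub_X_pow hT] at hdeg
  omega

lemma reverse_of_prod_one_sub_X_pow_mul_eq (hd : ∀ i ∈ s, d i ≠ 0)
    (hP : (∏ i ∈ s, (1 - X ^ d i)) * P = ∏ j ∈ t, (1 - X ^ T j)) :
    P.reverse = (-1) ^ (s.card + t.card) * P := by
  have hrev := congrArg reverse hP
  rw [reverse_mul_of_domain, reverse_prod_one_sub_X_pow, reverse_prod_one_sub_X_pow, ← hP] at hrev
  have hsq : ((-1) ^ s.card * (-1) ^ s.card : R[X]) = 1 := by
    rw [← mul_pow, neg_one_mul, neg_neg, one_pow]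
  apply mul_left_cancel₀ (prod_one_sub_X_pow_ne_zero hd)
  rw [pow_add]
  linear_combination (-1) ^ s.card * hrev - (∏ i ∈ s, (1 - X ^ d i)) * P.reverse * hsq

theorem stmt_13_general (hd : ∀ i ∈ s, d i ≠ 0) (hT : ∀ j ∈ t, T j ≠ 0)
    (hP : (∏ i ∈ s, (1 - X ^ d i)) * P = ∏ j ∈ t, (1 - X ^ T j)) :
    ∀ k ≤ ∑ j ∈ t, T j - ∑ i ∈ s, d i,
      P.coeff k = (-1) ^ (s.card + t.card) * P.coeff (∑ j ∈ t, T j - ∑ i ∈ s, d i - k) := by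
  intro k hk
  have hdeg := natDegree_of_prod_one_sub_X_pow_mul_eq hd hT hP
  have hcoeff := coeff_reverse P (P.natDegree - k)
  rw [revAt_le (Nat.sub_le _ _), Nat.sub_sub_self (hdeg ▸ hk),
    reverse_of_prod_one_sub_X_pow_mul_eq hd hP, hdeg] at hcoeff
  rw [← hcoeff, ← C_1, ← C_neg, ← C_pow, coeff_C_mul]

end Prod

/-- The quotient polynomial `P_3` is palindromic: with
`D = T1+T2+T3-d12-d23-d13` its degree, `c_k = c_{D-k}` for all `0 ≤ k ≤ D`. -/
theorem stmt_13 (T1 T2 T3 : ℕ) (h1 : 0 < T1) (h2 : 0 < T2) (h3 : 0 < T3)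
    (hgcd : Nat.gcd (Nat.gcd T1 T2) T3 = 1)
    (d12 d23 d13 : ℕ) (hd12 : d12 = Nat.gcd T1 T2) (hd23 : d23 = Nat.gcd T2 T3)
    (hd13 : d13 = Nat.gcd T1 T3)
    (P : ℤ[X])
    (hP : (1 - X ^ d12) * (1 - X ^ d23) * (1 - X ^ d13) * P =
      (1 - X ^ T1) * (1 - X ^ T2) * (1 - X ^ T3))
    (D : ℕ) (hD : D = T1 + T2 + T3 - d12 - d23 - d13) :
    ∀ k ≤ D, P.coeff k = P.coeff (D - k) := by
  subst hd12 hd23 hd13 hD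
  simpa [Fin.sum_univ_three, Nat.sub_sub] using
    stmt_13_general (s := .univ) (t := .univ) (d := ![T1.gcd T2, T2.gcd T3, T1.gcd T3])
      (T := ![T1, T2, T3]) (P := P) (by simp [Fin.forall_fin_succ, h1.ne', h2.ne'])
      (by simp [Fin.forall_fin_succ, h1.ne', h2.ne', h3.ne'])
      (by simpa [Fin.prod_univ_three] using hP)
end
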